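/- arXiv:2604.12785 — 7 statements merged into one kernel-verified Lean document; each statement's English description precedes it below -/
import Mathlib

section
/- For every n ≥ 1 and every choice of points x₁, …, xₙ ∈ ℝ, the n×n real matrix with entries e^{−|x_i − x_j|} is symmetric and positive semidefinite, i.e. Σ_{i,j} v_i v_j e^{−|x_i − x_j|} ≥ 0 for all v ∈ ℝⁿ. -/
/-!
The kernel factors as `e^{-|a - b|} = e^{-a} e^{-b} min (e^{2a}) (e^{2b})`. The kernel `min s t` on
`[0, ∞)` is the Lebesgue measure of `[0, s] ∩ [0, t]`, an `L²` inner product of indicator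
functions, so its matrices are Gram matrices (`MeasureTheory.posSemidef_matrix_measure_inter`).
The factors `e^{-a}`, `e^{-b}` are absorbed into the test vector.
-/

open Finset

lemma exp_neg_abs_sub_eq (a b : ℝ) :
    Real.exp (-|a - b|) = Real.exp (-a) * Real.exp (-b) *
      MeasureTheory.volume.real
        (Set.Icc 0 (Real.exp (2 * a)) ∩ Set.Icc 0 (Real.exp (2 * b))) := by
  rcases le_total a b with h | h
  · have h2 : Real.exp (2 * a) ≤ Real.exp (2 * b) := Real.exp_le_exp.2 (by linarith)
    rw [Set.Icc_inter_Icc, sup_idem, inf_eq_left.2 h2,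
      Real.volume_real_Icc_of_le (Real.exp_pos _).le, sub_zero,
      ← Real.exp_add, ← Real.exp_add, abs_of_nonpos (by linarith)]
    congr 1; ring
  · have h2 : Real.exp (2 * b) ≤ Real.exp (2 * a) := Real.exp_le_exp.2 (by linarith)
    rw [Set.Icc_inter_Icc, sup_idem, inf_eq_right.2 h2,
      Real.volume_real_Icc_of_le (Real.exp_pos _).le, sub_zero,
      ← Real.exp_add, ← Real.exp_add, abs_of_nonneg (by linarith)]
    congr 1; ring

/-- For any points `x₁, …, xₙ`, the matrix with entries `e^{-|xᵢ - xⱼ|}` is symmetric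
and positive semidefinite. -/
theorem exp_neg_abs_matrix_posSemidef (n : ℕ) (hn : 1 ≤ n) (x : Fin n → ℝ) :
    (∀ i j, Real.exp (-|x i - x j|) = Real.exp (-|x j - x i|)) ∧
      ∀ v : Fin n → ℝ, 0 ≤ ∑ i, ∑ j, v i * v j * Real.exp (-|x i - x j|) := by
  refine ⟨fun i j => by rw [abs_sub_comm], fun v => ?_⟩
  have hpsd := MeasureTheory.posSemidef_matrix_measure_inter
    (μ := (MeasureTheory.volume : MeasureTheory.Measure ℝ))
    (s := fun i : Fin n => Set.Icc 0 (Real.exp (2 * x i)))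
    (fun _ => measurableSet_Icc) (fun _ => isCompact_Icc.measure_ne_top)
  refine (hpsd.dotProduct_mulVec_nonneg (fun i => v i * Real.exp (-x i))).trans_eq ?_
  simp only [dotProduct, Matrix.mulVec, Matrix.of_apply, Pi.star_apply, star_trivial,
    Finset.mul_sum]
  refine Finset.sum_congr rfl fun i _ => Finset.sum_congr rfl fun j _ => ?_
  rw [exp_neg_abs_sub_eq]
  ring
end

section
/- Let n ≥ 1, let d₁ < d₂ < … < dₙ be real numbers, and let t > 0. Then the determinant of the n×n matrix A₀ with entries (A₀)_{jk} = e^{−|d_j − d_k| t} equals ∏_{j=1}^{n−1} (1 − e^{−2(d_{j+1} − d_j) t}); in particular this determinant is strictly positive. -/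
/-!
Write `A` for the matrix and `cᵢ = e^{-(d_{i+1} - d_i) t}`. For `k ≤ i` the exponential is
multiplicative along `d_k ≤ d_i < d_{i+1}`, so `A_{i+1,k} = cᵢ A_{i,k}`. Subtracting `cᵢ` times
row `i` from row `i + 1`, for every `i`, therefore leaves an upper triangular matrix with the same
determinant. Its diagonal is `1` followed by the entries `1 - cᵢ²`, since `A_{i,i+1} = cᵢ`, and
each of these is positive because `(d_{i+1} - d_i) t > 0`.
-/

open Finset

/-- The telescoped form of the step-by-step monotonicity hypothesis on the first `n` values. -/
lemma le_of_forall_lt_succ {n : ℕ} {d : ℕ → ℝ} (hd : ∀ j, j + 1 < n → d j < d (j + 1))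
    {k i : ℕ} (hki : k ≤ i) (hi : i < n) : d k ≤ d i := by
  induction i, hki using Nat.le_induction with
  | base => exact le_rfl
  | succ i _ ih => exact (ih (by omega)).trans (hd i hi).le

/-- The product formula by row reduction; as a formal identity it holds for every real `t`. -/
lemma det_exp_neg_abs_eq_prod (m : ℕ) (d : ℕ → ℝ)
    (hd : ∀ j, j + 1 < m + 1 → d j < d (j + 1)) (t : ℝ) :
    Matrix.det (Matrix.of fun j k : Fin (m + 1) => Real.exp (-|d j.val - d k.val| * t)) =
      ∏ j ∈ Finset.range m, (1 - Real.exp (-2 * (d (j + 1) - d j) * t)) := by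
  set A : Matrix (Fin (m + 1)) (Fin (m + 1)) ℝ :=
    Matrix.of fun j k : Fin (m + 1) => Real.exp (-|d j.val - d k.val| * t) with hA
  let c : Fin m → ℝ := fun i => Real.exp (-(d (i.val + 1) - d i.val) * t)
  let B : Matrix (Fin (m + 1)) (Fin (m + 1)) ℝ := Matrix.of fun i j =>
    Fin.cases (A 0 j) (fun i : Fin m => A i.succ j - c i * A i.castSucc j) i
  have hAB : A.det = B.det :=
    Matrix.det_eq_of_forall_row_eq_smul_add_pred c (fun j => by simp [B])
      (fun i j => by simp [B])
  have hB : B.BlockTriangular id := by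
    intro i j hij
    induction i using Fin.cases with
    | zero => exact absurd hij (Fin.not_lt_zero j)
    | succ i =>
      have hji : j.val ≤ i.val := by
        have : j.val < i.val + 1 := hij
        omega
      have h1 : d j.val ≤ d i.val := le_of_forall_lt_succ hd hji (by omega)
      have h2 : d i.val < d (i.val + 1) := hd i.val (by omega)
      simp only [B, A, c, Matrix.of_apply, Fin.cases_succ, Fin.val_succ, Fin.val_castSucc]
      rw [← Real.exp_add, abs_of_nonneg (by linarith), abs_of_nonneg (by linarith), sub_eq_zero]
      congr 1
      ring
  rw [hAB, Matrix.det_of_isUpperTriangular hB, Fin.prod_univ_succ, Finset.prod_range]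
  have h0 : B 0 0 = 1 := by simp [B, A]
  rw [h0, one_mul]
  refine Finset.prod_congr rfl fun i _ => ?_
  have h2 : d i.val < d (i.val + 1) := hd i.val (by omega)
  simp only [B, A, c, Matrix.of_apply, Fin.cases_succ, Fin.val_succ, Fin.val_castSucc]
  rw [← Real.exp_add, abs_of_neg (by linarith : d i.val - d (i.val + 1) < 0), sub_self, abs_zero,
    neg_zero, zero_mul, Real.exp_zero]
  congr 2
  ring

/-- For `d₀ < d₁ < … < d_{n-1}` and `t > 0`, the determinant of the matrix
`(e^{-|d_j - d_k| t})` equals `∏_{j=0}^{n-2} (1 - e^{-2(d_{j+1} - d_j) t})`,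
which is strictly positive. -/
theorem det_exp_neg_abs_matrix (n : ℕ) (hn : 1 ≤ n) (d : ℕ → ℝ)
    (hd : ∀ j, j + 1 < n → d j < d (j + 1)) (t : ℝ) (ht : 0 < t) :
    Matrix.det (Matrix.of fun j k : Fin n => Real.exp (-|d j.val - d k.val| * t)) =
        ∏ j ∈ Finset.range (n - 1), (1 - Real.exp (-2 * (d (j + 1) - d j) * t)) ∧
      0 < Matrix.det (Matrix.of fun j k : Fin n => Real.exp (-|d j.val - d k.val| * t)) := by
  obtain ⟨m, rfl⟩ : ∃ m, n = m + 1 := ⟨n - 1, by omega⟩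
  rw [det_exp_neg_abs_eq_prod m d hd t, Nat.add_sub_cancel]
  refine ⟨rfl, Finset.prod_pos fun j hj => ?_⟩
  have h := hd j (by have := Finset.mem_range.mp hj; omega)
  rw [sub_pos, Real.exp_lt_one_iff]
  nlinarith [mul_pos (sub_pos.mpr h) ht]
end

section
/- Let n ≥ 1, let d₁ ≤ d₂ ≤ … ≤ dₙ be real numbers, and let v ∈ ℝⁿ satisfy Σ_{j=1}^n v_j = 0. Then Σ_{j,k=1}^n (−|d_j − d_k|) v_j v_k = 2 Σ_{j=1}^{n−1} (d_{j+1} − d_j) (Σ_{k=1}^{j} v_k)². In particular the left-hand side is nonnegative. -/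
/-!
Write `S j = ∑ k < j, v k`. Without the mean-zero hypothesis, the form on the first `m + 1`
points is `2 ∑_{j < m} (d (j+1) - d j) (S (j+1))² - 2 S (m+1) ∑_{k ≤ m} (d m - d k) v k`
(`quadratic_form_eq_general`). This follows by induction on `m`: since `d (m+1)` is the largest
value so far, adjoining it contributes the cross term `-2 v (m+1) ∑_{k ≤ m} (d (m+1) - d k) v k`,
free of absolute values. The correction term vanishes when the total mass is `0`.
-/

open Finset

/-- The form on `m + 1` points for arbitrary weights; the last summand is the correction caused
by a nonzero total mass. -/
lemma quadratic_form_eq_general (d v : ℕ → ℝ) (m : ℕ) (hd : ∀ j < m, d j ≤ d (j + 1)) :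
    (∑ j ∈ Finset.range (m + 1), ∑ k ∈ Finset.range (m + 1), (-|d j - d k|) * v j * v k) =
      2 * ∑ j ∈ Finset.range m, (d (j + 1) - d j) * (∑ k ∈ Finset.range (j + 1), v k) ^ 2
        - 2 * (∑ k ∈ Finset.range (m + 1), v k) *
          ∑ k ∈ Finset.range (m + 1), (d m - d k) * v k := by
  induction m with
  | zero => simp
  | succ m ih =>
    have hle : ∀ k ∈ Finset.range (m + 1), d k ≤ d (m + 1) := by
      intro k hk
      have hk' : k ≤ m + 1 := (Finset.mem_range.mp hk).le
      exact Nat.decreasingInduction' (P := fun i => d i ≤ d (m + 1))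
        (fun i hi _ h => (hd i hi).trans h) hk' le_rfl
    have hrow : ∑ k ∈ Finset.range (m + 1), (-|d (m + 1) - d k|) * v (m + 1) * v k =
        -v (m + 1) * ∑ k ∈ Finset.range (m + 1), (d (m + 1) - d k) * v k := by
      rw [Finset.mul_sum]
      refine Finset.sum_congr rfl fun k hk => ?_
      rw [abs_of_nonneg (sub_nonneg.mpr (hle k hk))]
      ring
    have hcol : ∑ j ∈ Finset.range (m + 1), (-|d j - d (m + 1)|) * v j * v (m + 1) =
        -v (m + 1) * ∑ k ∈ Finset.range (m + 1), (d (m + 1) - d k) * v k := by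
      rw [← hrow]
      refine Finset.sum_congr rfl fun k _ => ?_
      rw [abs_sub_comm]
      ring
    have hshift : ∑ k ∈ Finset.range (m + 1), (d (m + 1) - d k) * v k =
        (∑ k ∈ Finset.range (m + 1), (d m - d k) * v k) +
          (d (m + 1) - d m) * ∑ k ∈ Finset.range (m + 1), v k := by
      rw [Finset.mul_sum, ← Finset.sum_add_distrib]
      exact Finset.sum_congr rfl fun k _ => by ring
    have hsplit : ∑ j ∈ Finset.range (m + 2), ∑ k ∈ Finset.range (m + 2),
          (-|d j - d k|) * v j * v k =
        (∑ j ∈ Finset.range (m + 1), ∑ k ∈ Finset.range (m + 1), (-|d j - d k|) * v j * v k) +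
          (∑ j ∈ Finset.range (m + 1), (-|d j - d (m + 1)|) * v j * v (m + 1)) +
          ∑ k ∈ Finset.range (m + 1), (-|d (m + 1) - d k|) * v (m + 1) * v k := by
      simp only [Finset.sum_range_succ _ (m + 1), Finset.sum_add_distrib, sub_self, abs_zero,
        neg_zero, zero_mul, add_zero]
    rw [hsplit, hcol, hrow, ih fun j hj => hd j (by omega)]
    rw [Finset.sum_range_succ
        (fun j => (d (j + 1) - d j) * (∑ k ∈ Finset.range (j + 1), v k) ^ 2) m,
      Finset.sum_range_succ v (m + 1),
      Finset.sum_range_succ (fun k => (d (m + 1) - d k) * v k) (m + 1), hshift]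
    ring

/-- For a nondecreasing tuple `d` and a mean-zero vector `v`, the quadratic form of the
matrix `(-|d_j - d_k|)` equals `2 ∑_{j} (d_{j+1} - d_j) (∑_{k ≤ j} v_k)²`; in particular
it is nonnegative. -/
theorem neg_abs_quadratic_form_eq (n : ℕ) (hn : 1 ≤ n) (d : ℕ → ℝ)
    (hd : ∀ j, j + 1 < n → d j ≤ d (j + 1)) (v : ℕ → ℝ)
    (hv : ∑ j ∈ Finset.range n, v j = 0) :
    (∑ j ∈ Finset.range n, ∑ k ∈ Finset.range n, (-|d j - d k|) * v j * v k) =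
        2 * ∑ j ∈ Finset.range (n - 1),
          (d (j + 1) - d j) * (∑ k ∈ Finset.range (j + 1), v k) ^ 2 ∧
      0 ≤ ∑ j ∈ Finset.range n, ∑ k ∈ Finset.range n, (-|d j - d k|) * v j * v k := by
  have hsub : n - 1 + 1 = n := Nat.sub_add_cancel hn
  have hd' : ∀ j < n - 1, d j ≤ d (j + 1) := fun j hj => hd j (by omega)
  have key := quadratic_form_eq_general d v (n - 1) hd'
  rw [hsub, hv, mul_zero, zero_mul, sub_zero] at key
  refine ⟨key, ?_⟩
  rw [key]
  refine mul_nonneg zero_le_two (Finset.sum_nonneg fun j hj => ?_)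
  exact mul_nonneg (sub_nonneg.mpr (hd' j (Finset.mem_range.mp hj))) (sq_nonneg _)
end

section
/- Let n ≥ 2, let d₁ < d₂ < … < dₙ be real numbers, and let v ∈ ℝⁿ be a nonzero vector with Σ_{j=1}^n v_j = 0. Then Σ_{j,k=1}^n (−|d_j − d_k|) v_j v_k > 0. -/
/-!
Write `S i = ∑ j < i, v j` for the partial sums. Decomposing `|d j - d k|` into the consecutive
gaps `d (i + 1) - d i` lying between the two points, the gap `i` is counted with total weight
`2 * S (i + 1) * (S n - S (i + 1))`. When `S n = 0` the quadratic form is therefore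
`2 * ∑ i, (d (i + 1) - d i) * S (i + 1) ^ 2`, a sum of squares with positive coefficients
(`quadratic_form_eq_sum_gaps`). It vanishes only if all partial sums vanish, that is, if `v = 0`.
-/

open Finset

/-- Summation by parts: the weighted distances to the last point, in terms of gaps. -/
lemma sum_sub_mul_eq_sum_gaps (d v : ℕ → ℝ) (m : ℕ) :
    ∑ j ∈ range m, (d m - d j) * v j
      = ∑ i ∈ range m, (d (i + 1) - d i) * ∑ j ∈ range (i + 1), v j := by
  induction m with
  | zero => simp
  | succ m ih =>
    have h : ∑ j ∈ range (m + 1), (d (m + 1) - d j) * v j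
        = (d (m + 1) - d m) * ∑ j ∈ range (m + 1), v j
          + ∑ j ∈ range (m + 1), (d m - d j) * v j := by
      rw [mul_sum, ← sum_add_distrib]
      exact sum_congr rfl fun j _ => by ring
    rw [h, sum_range_succ (fun j => (d m - d j) * v j), ih,
      sum_range_succ (fun i => (d (i + 1) - d i) * ∑ j ∈ range (i + 1), v j)]
    ring

/-- The gap decomposition of the quadratic form, for vectors of arbitrary total mass; the last
term disappears when the total mass is zero. -/
lemma quadratic_form_eq_sum_gaps (d v : ℕ → ℝ) (m : ℕ) (hd : ∀ j < m, d j ≤ d (j + 1)) :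
    ∑ j ∈ range (m + 1), ∑ k ∈ range (m + 1), (-|d j - d k|) * v j * v k
      = 2 * ∑ i ∈ range m, (d (i + 1) - d i) * (∑ j ∈ range (i + 1), v j) ^ 2
        - 2 * (∑ j ∈ range (m + 1), v j)
          * ∑ i ∈ range m, (d (i + 1) - d i) * ∑ j ∈ range (i + 1), v j := by
  induction m with
  | zero => simp
  | succ m ih =>
    have hmono : ∀ j < m + 1, d j ≤ d (m + 1) := fun j hj =>
      Nat.rec (motive := fun r => j + r ≤ m + 1 → d j ≤ d (j + r)) (fun _ => le_rfl)
        (fun r ihr hr => (ihr (by omega)).trans (hd (j + r) (by omega))) (m + 1 - j) (by omega)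
        |>.trans_eq (by congr 1; omega)
    have hrow : ∑ k ∈ range (m + 1), (-|d (m + 1) - d k|) * v (m + 1) * v k
        = -v (m + 1) * ∑ k ∈ range (m + 1), (d (m + 1) - d k) * v k := by
      rw [mul_sum]
      refine sum_congr rfl fun k hk => ?_
      rw [abs_of_nonneg (sub_nonneg.2 (hmono k (mem_range.1 hk)))]
      ring
    have hcol : ∑ k ∈ range (m + 1), (-|d k - d (m + 1)|) * v k * v (m + 1)
        = -v (m + 1) * ∑ k ∈ range (m + 1), (d (m + 1) - d k) * v k := by
      rw [← hrow]
      exact sum_congr rfl fun k _ => by rw [abs_sub_comm]; ring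
    have hsplit : ∑ j ∈ range (m + 2), ∑ k ∈ range (m + 2), (-|d j - d k|) * v j * v k
        = ∑ j ∈ range (m + 1), ∑ k ∈ range (m + 1), (-|d j - d k|) * v j * v k
          - 2 * v (m + 1) * ∑ k ∈ range (m + 1), (d (m + 1) - d k) * v k := by
      simp only [sum_range_succ _ (m + 1), sum_add_distrib, hrow, hcol, sub_self, abs_zero]
      ring
    rw [hsplit, ih fun j hj => hd j (by omega), sum_sub_mul_eq_sum_gaps,
      sum_range_succ _ (m + 1), sum_range_succ _ m,
      sum_range_succ (fun i => (d (i + 1) - d i) * (∑ j ∈ range (i + 1), v j) ^ 2) m,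
      sum_range_succ (fun i => (d (i + 1) - d i) * ∑ j ∈ range (i + 1), v j) m]
    simp only [sum_range_succ _ m]
    ring

/-- For a strictly increasing tuple `d` and a nonzero mean-zero vector `v`, the quadratic
form of the matrix `(-|d_j - d_k|)` is strictly positive. -/
theorem neg_abs_quadratic_form_pos (n : ℕ) (hn : 2 ≤ n) (d : ℕ → ℝ)
    (hd : ∀ j, j + 1 < n → d j < d (j + 1)) (v : ℕ → ℝ)
    (hv0 : ∑ j ∈ Finset.range n, v j = 0) (hvne : ∃ j < n, v j ≠ 0) :
    0 < ∑ j ∈ Finset.range n, ∑ k ∈ Finset.range n, (-|d j - d k|) * v j * v k := by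
  obtain ⟨m, rfl⟩ : ∃ m, n = m + 1 := ⟨n - 1, by omega⟩
  have hgap : ∀ i < m, 0 < d (i + 1) - d i := fun i hi => sub_pos.2 (hd i (by omega))
  rw [quadratic_form_eq_sum_gaps d v m fun j hj => (hd j (by omega)).le, hv0]
  simp only [mul_zero, zero_mul, sub_zero]
  have hnonneg : ∀ i ∈ range m, 0 ≤ (d (i + 1) - d i) * (∑ j ∈ range (i + 1), v j) ^ 2 :=
    fun i hi => mul_nonneg (hgap i (mem_range.1 hi)).le (sq_nonneg _)
  refine mul_pos two_pos ((sum_nonneg hnonneg).lt_of_ne' fun h0 => ?_)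
  have hS : ∀ i ≤ m + 1, ∑ j ∈ range i, v j = 0 := by
    rintro (_ | i) hi
    · simp
    · rcases (Nat.le_of_succ_le_succ hi).lt_or_eq with him | rfl
      · have h := (sum_eq_zero_iff_of_nonneg hnonneg).1 h0 i (mem_range.2 him)
        simpa [(hgap i him).ne'] using h
      · exact hv0
  obtain ⟨j, hj, hvj⟩ := hvne
  have h := hS (j + 1) (by omega)
  rw [sum_range_succ, hS j (by omega), zero_add] at h
  exact hvj h
end

section
/- Let n ≥ 1, let d₁ < d₂ < … < dₙ be real numbers, let ρ₀ > ρ₁ > … > ρₙ be real numbers, and let ξ ∈ ℝ with ξ ≠ 0. Let A(ξ) be the n×n real matrix with entries A(ξ)_{kj} = ((ρ_{j−1} − ρ_j)/2)·e^{−|d_k − d_j||ξ|}. Then every complex root λ of the characteristic polynomial of A(ξ) is a real number with λ > 0. -/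
open Polynomial

/-!
The exponential kernel is a Brownian-type covariance: with `v i = exp (2 d i |ξ|)`, which is positive
and increasing,
`exp (-|d k - d j| |ξ|) = exp (-d k |ξ|) * exp (-d j |ξ|) * v (min k j)`,
and `v (min k j)` is the sum of the positive increments of `v` over the indices `i ≤ min k j`.
Hence the kernel matrix factors as `A₀ = B Bᵀ` with `B` lower triangular and positive on the diagonal
(`kernel_eq_factor`, `factor_det_ne_zero`). Since `A = B (Bᵀ Q)` has the same characteristic
polynomial as `Bᵀ Q B`, and `Q` is a positive diagonal matrix, the roots are the
eigenvalues of a real positive definite matrix.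
-/

namespace Muskat

/-- The increments `v 0, v 1 - v 0, v 2 - v 1, …` of `v i = exp (2 * d i * t)`, with `v (-1) = 0`. -/
noncomputable def increment (d : ℕ → ℝ) (t : ℝ) : ℕ → ℝ
  | 0 => Real.exp (2 * d 0 * t)
  | i + 1 => Real.exp (2 * d (i + 1) * t) - Real.exp (2 * d i * t)

lemma sum_increment (d : ℕ → ℝ) (t : ℝ) (m : ℕ) :
    ∑ i ∈ Finset.range (m + 1), increment d t i = Real.exp (2 * d m * t) := by
  induction m with
  | zero => simp [increment]
  | succ m ih => rw [Finset.sum_range_succ, ih, increment]; ring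

lemma increment_pos {n : ℕ} {d : ℕ → ℝ} (hd : ∀ j, j + 1 < n → d j < d (j + 1))
    {t : ℝ} (ht : 0 < t) {i : ℕ} (hi : i < n) : 0 < increment d t i := by
  cases i with
  | zero => exact Real.exp_pos _
  | succ i =>
    have h := mul_lt_mul_of_pos_right (hd i hi) ht
    exact sub_pos.2 (Real.exp_lt_exp.2 (by linarith))

lemma depth_mono {n : ℕ} {d : ℕ → ℝ} (hd : ∀ j, j + 1 < n → d j < d (j + 1))
    {k j : ℕ} (hkj : k ≤ j) (hj : j < n) : d k ≤ d j := by
  induction j, hkj using Nat.le_induction with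
  | base => exact le_rfl
  | succ j _ ih => exact (ih (by omega)).trans (hd j hj).le

/-- The lower triangular Cholesky factor of the exponential kernel `exp (-|d k - d j| * t)`. -/
noncomputable def factor (n : ℕ) (d : ℕ → ℝ) (t : ℝ) : Matrix (Fin n) (Fin n) ℝ :=
  Matrix.of fun k i => if i ≤ k then Real.exp (-(d k * t)) * √(increment d t i) else 0

lemma factor_det_ne_zero {n : ℕ} {d : ℕ → ℝ} (hd : ∀ j, j + 1 < n → d j < d (j + 1))
    {t : ℝ} (ht : 0 < t) : (factor n d t).det ≠ 0 := by
  rw [Matrix.det_of_lowerTriangular]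
  · refine Finset.prod_ne_zero_iff.2 fun i _ => ?_
    simpa [factor] using (Real.sqrt_pos.2 (increment_pos hd ht i.2)).ne'
  · intro k i hki
    have : k < i := hki
    simp [factor, this]

lemma kernel_eq_factor {n : ℕ} {d : ℕ → ℝ} (hd : ∀ j, j + 1 < n → d j < d (j + 1))
    {t : ℝ} (ht : 0 < t) :
    (Matrix.of fun k j : Fin n => Real.exp (-|d k - d j| * t)) =
      factor n d t * (factor n d t).transpose := by
  -- Both sides are symmetric in the two indices, so only `k ≤ j` needs computing.
  have key : ∀ k j : Fin n, k ≤ j → Real.exp (-|d k - d j| * t) =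
      (factor n d t * (factor n d t).transpose) k j := by
    intro k j hkj
    have hterm : ∀ i : Fin n, factor n d t k i * factor n d t j i =
        Real.exp (-(d k * t)) * Real.exp (-(d j * t)) *
          if (i : ℕ) < k + 1 then increment d t i else 0 := by
      intro i
      by_cases hi : i ≤ k
      · have h1 : (i : ℕ) < k + 1 := Nat.lt_succ_of_le hi
        have h2 := Real.mul_self_sqrt (increment_pos hd ht i.2).le
        simp only [factor, Matrix.of_apply, hi, hi.trans hkj, h1, if_true]
        linear_combination Real.exp (-(d k * t)) * Real.exp (-(d j * t)) * h2
      · have h1 : ¬ (i : ℕ) < k + 1 := fun h => hi (Nat.le_of_lt_succ h)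
        simp [factor, hi, h1]
    have hsum : ∑ i : Fin n, (if (i : ℕ) < k + 1 then increment d t i else 0) =
        Real.exp (2 * d k * t) := by
      rw [Fin.sum_univ_eq_sum_range (fun i => if i < (k : ℕ) + 1 then increment d t i else 0) n,
        ← Finset.sum_filter, ← sum_increment]
      congr 1
      ext i
      simp only [Finset.mem_filter, Finset.mem_range]
      omega
    rw [Matrix.mul_apply]
    simp only [Matrix.transpose_apply, hterm]
    rw [← Finset.mul_sum, hsum, ← Real.exp_add, ← Real.exp_add,
      abs_of_nonpos (sub_nonpos.2 (depth_mono hd hkj j.2))]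
    congr 1
    ring
  ext k j
  rcases le_total k j with h | h
  · exact key k j h
  · rw [Matrix.of_apply, abs_sub_comm, key j k h, ← Matrix.transpose_apply (_ * _) k j,
      Matrix.transpose_mul, Matrix.transpose_transpose]

/-- The complex roots of the characteristic polynomial of a real positive definite matrix are
positive reals. -/
lemma posDef_charpoly_root {n : ℕ} {M : Matrix (Fin n) (Fin n) ℝ} (hM : M.PosDef) {z : ℂ}
    (hz : Polynomial.aeval z M.charpoly = 0) : z.im = 0 ∧ 0 < z.re := by
  rw [hM.1.charpoly_eq, map_prod, Finset.prod_eq_zero_iff] at hz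
  obtain ⟨i, -, hi⟩ := hz
  have hzi : z = (hM.1.eigenvalues i : ℂ) := by simpa [sub_eq_zero] using hi
  subst hzi
  exact ⟨Complex.ofReal_im _, by simpa using hM.eigenvalues_pos i⟩

end Muskat

/-- For strictly increasing depths `d`, strictly decreasing densities `ρ`, and `ξ ≠ 0`,
every complex root of the characteristic polynomial of the linearized Muskat matrix
`A(ξ)_{kj} = ((ρ_{j-1} - ρ_j)/2) e^{-|d_k - d_j||ξ|}` is a strictly positive real number. -/
theorem muskat_matrix_eigenvalues_pos (n : ℕ) (hn : 1 ≤ n) (d : ℕ → ℝ)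
    (hd : ∀ j, j + 1 < n → d j < d (j + 1))
    (ρ : ℕ → ℝ) (hρ : ∀ j, j < n → ρ (j + 1) < ρ j)
    (ξ : ℝ) (hξ : ξ ≠ 0) (z : ℂ)
    (hz : Polynomial.aeval z
        ((Matrix.of fun k j : Fin n =>
          ((ρ j.val - ρ (j.val + 1)) / 2) * Real.exp (-|d k.val - d j.val| * |ξ|)).charpoly)
      = 0) :
    z.im = 0 ∧ 0 < z.re := by
  have ht : 0 < |ξ| := abs_pos.2 hξ
  set B := Muskat.factor n d |ξ| with hB
  set Q : Matrix (Fin n) (Fin n) ℝ :=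
    Matrix.diagonal fun j => (ρ j.val - ρ (j.val + 1)) / 2 with hQ
  have hA : (Matrix.of fun k j : Fin n =>
      ((ρ j.val - ρ (j.val + 1)) / 2) * Real.exp (-|d k.val - d j.val| * |ξ|)) =
      B * (B.transpose * Q) := by
    rw [← Matrix.mul_assoc, ← Muskat.kernel_eq_factor hd ht]
    ext k j
    rw [hQ, Matrix.mul_diagonal, Matrix.of_apply, Matrix.of_apply, mul_comm]
  rw [hA, Matrix.charpoly_mul_comm] at hz
  have hQpos : Q.PosDef :=
    Matrix.PosDef.diagonal fun j => half_pos (sub_pos.2 (hρ j j.2))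
  have hBinj : Function.Injective B.mulVec :=
    Matrix.mulVec_injective_of_isUnit ((Matrix.isUnit_iff_isUnit_det _).2
      (isUnit_iff_ne_zero.2 (Muskat.factor_det_ne_zero hd ht)))
  have hM := hQpos.conjTranspose_mul_mul_same hBinj
  rw [Matrix.conjTranspose_eq_transpose_of_trivial] at hM
  exact Muskat.posDef_charpoly_root hM hz
end

section
/- Let n ≥ 1, let d₁ < d₂ < … < dₙ be real numbers, let ρ₀ > ρ₁ > … > ρₙ be real numbers, and let ξ ∈ ℝ (possibly ξ = 0). Let A(ξ) be the n×n real matrix with entries A(ξ)_{kj} = ((ρ_{j−1} − ρ_j)/2)·e^{−|d_k − d_j||ξ|}. Then A(ξ) is diagonalizable over ℝ: there exist an invertible real n×n matrix P and a diagonal real n×n matrix D such that P⁻¹ A(ξ) P = D. -/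
/-!
The matrix has the form `S * Q` with `S` symmetric and `Q` diagonal with positive entries. With
`R = Q^{1/2}` we have `S * Q = R⁻¹ * (R * S * R) * R`, and `R * S * R` is symmetric, so the spectral
theorem gives an orthogonal `U` with `R * S * R = U * Λ * Uᵀ`. Hence `P = R⁻¹ * U` diagonalizes
`S * Q`.
-/

theorem exists_diagonalization_mul_diagonal {ι : Type*} [Fintype ι] [DecidableEq ι]
    (S : Matrix ι ι ℝ) (hS : S.IsHermitian) (q : ι → ℝ) (hq : ∀ i, 0 < q i) :
    ∃ P D : Matrix ι ι ℝ, IsUnit P.det ∧ D.IsDiag ∧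
      P⁻¹ * (S * Matrix.diagonal q) * P = D := by
  set R : Matrix ι ι ℝ := Matrix.diagonal fun i => √(q i) with hR
  set R' : Matrix ι ι ℝ := Matrix.diagonal fun i => (√(q i))⁻¹ with hR'
  have hne : ∀ i, √(q i) ≠ 0 := fun i => (Real.sqrt_pos.2 (hq i)).ne'
  have hRR' : R * R' = 1 := by simp [hR, hR', Matrix.diagonal_mul_diagonal, hne]
  have hRR : R * R = Matrix.diagonal q := by
    simp [hR, Matrix.diagonal_mul_diagonal, fun i => Real.mul_self_sqrt (hq i).le]
  have hT : (R * S * R).IsHermitian := by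
    have hRh : R.conjTranspose = R := by simp [hR, Matrix.diagonal_conjTranspose]
    rw [Matrix.IsHermitian, Matrix.conjTranspose_mul, Matrix.conjTranspose_mul, hRh, hS.eq,
      Matrix.mul_assoc]
  set U : Matrix ι ι ℝ := (hT.eigenvectorUnitary : Matrix ι ι ℝ) with hU
  have hUU : star U * U = 1 := Unitary.coe_star_mul_self hT.eigenvectorUnitary
  have hdiag : star U * (R * S * R) * U = Matrix.diagonal hT.eigenvalues := by
    have h := hT.conjStarAlgAut_star_eigenvectorUnitary
    simpa [Unitary.conjStarAlgAut_apply, Function.comp_def] using h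
  have hinv : (star U * R) * (R' * U) = 1 := by
    rw [Matrix.mul_assoc, ← Matrix.mul_assoc R, hRR', Matrix.one_mul, hUU]
  refine ⟨R' * U, Matrix.diagonal hT.eigenvalues, Matrix.isUnit_det_of_left_inverse hinv,
    Matrix.isDiag_diagonal _, ?_⟩
  rw [Matrix.inv_eq_left_inv hinv, ← hdiag, ← hRR]
  calc star U * R * (S * (R * R)) * (R' * U)
      = star U * (R * S * R) * (R * R') * U := by simp only [Matrix.mul_assoc]
    _ = star U * (R * S * R) * U := by rw [hRR', Matrix.mul_one]

/-- For strictly increasing depths `d` and strictly decreasing densities `ρ`, the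
linearized Muskat matrix `A(ξ)_{kj} = ((ρ_{j-1} - ρ_j)/2) e^{-|d_k - d_j||ξ|}` is
diagonalizable over `ℝ` for every `ξ` (including `ξ = 0`). -/
theorem muskat_matrix_diagonalizable (n : ℕ) (hn : 1 ≤ n) (d : ℕ → ℝ)
    (hd : ∀ j, j + 1 < n → d j < d (j + 1))
    (ρ : ℕ → ℝ) (hρ : ∀ j, j < n → ρ (j + 1) < ρ j) (ξ : ℝ) :
    ∃ P D : Matrix (Fin n) (Fin n) ℝ, IsUnit P.det ∧ D.IsDiag ∧
      P⁻¹ * (Matrix.of fun k j : Fin n =>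
          ((ρ j.val - ρ (j.val + 1)) / 2) * Real.exp (-|d k.val - d j.val| * |ξ|)) * P = D := by
  let S : Matrix (Fin n) (Fin n) ℝ :=
    Matrix.of fun k j => Real.exp (-|d k.val - d j.val| * |ξ|)
  let q : Fin n → ℝ := fun j => (ρ j.val - ρ (j.val + 1)) / 2
  have hS : S.IsHermitian := by
    ext k j
    simp [S, abs_sub_comm]
  have hq : ∀ j, 0 < q j := fun j => half_pos (sub_pos.2 (hρ j.val j.isLt))
  have hA : (Matrix.of fun k j : Fin n =>
      ((ρ j.val - ρ (j.val + 1)) / 2) * Real.exp (-|d k.val - d j.val| * |ξ|))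
      = S * Matrix.diagonal q := by
    ext k j
    simp [S, q, Matrix.mul_diagonal, mul_comm]
  rw [hA]
  exact exists_diagonalization_mul_diagonal S hS q hq
end

section
/- Let n ≥ 1 and let d₁ < d₂ < … < dₙ be real numbers. Then there exist ε > 0 and α > 0 such that for all ξ with 0 < ξ < ε and all v ∈ ℝⁿ, Σ_{j,k=1}^n v_j v_k e^{−|d_j − d_k| ξ} ≥ α ξ Σ_{j=1}^n v_j². Equivalently, the smallest eigenvalue of the symmetric positive semidefinite matrix A₀(ξ) = (e^{−|d_j − d_k| ξ}) is at least α ξ for all 0 < ξ < ε. -/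
open Finset

/-!
The kernel `e^{-|x - y| ξ}` is Markovian. With `r_j = e^{-(d_{j+1} - d_j) ξ}` and the discounted
partial sums `S_j = ∑_{k ≤ j} v_k e^{-(d_j - d_k) ξ}`, which satisfy
`S_{j+1} = r_j S_j + v_{j+1}`, completing the square one variable at a time gives
`Q_{j+1} = Q_j + S_{j+1}² - r_j² S_j²` for the quadratic form `Q_j` in the first `j` variables.
If every `r_j² ≤ 1 - m`, this recursion propagates the bound
`Q_j ≥ (m / 4) ∑_{k ≤ j} v_k² + (1 - m / 2) S_j²`, because `v_{j+1}² ≤ 2 (S_{j+1}² + S_j²)`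
(`form_lower_bound`). When all gaps of `d` are at least `δ` and `2 δ ξ ≤ 1`, the choice `m = δ ξ`
is admissible, so `α = δ / 4` works.
-/

/-- The coercivity bound together with the multiple of the squared last discounted partial sum
that is needed to carry the induction on the number of points. -/
lemma form_lower_bound (ξ m : ℝ) (hm0 : 0 ≤ m) (n : ℕ) (d v : Fin (n + 1) → ℝ)
    (hd : StrictMono d)
    (hgap : ∀ i j, i < j → Real.exp (-(d j - d i) * ξ) ^ 2 ≤ 1 - m) :
    m / 4 * ∑ j, v j ^ 2
        + (1 - m / 2) * (∑ k, v k * Real.exp (-(d (Fin.last n) - d k) * ξ)) ^ 2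
      ≤ ∑ j, ∑ k, v j * v k * Real.exp (-|d j - d k| * ξ) := by
  induction n with
  | zero =>
    simp
    nlinarith [mul_nonneg hm0 (sq_nonneg (v 0))]
  | succ n ih =>
    have h := ih (fun i => d i.castSucc) (fun i => v i.castSucc)
      (fun i j hij => hd (Fin.castSucc_lt_castSucc_iff.2 hij))
      (fun i j hij => hgap _ _ (Fin.castSucc_lt_castSucc_iff.2 hij))
    have hr := hgap (Fin.last n).castSucc (Fin.last (n + 1)) (Fin.castSucc_lt_last _)
    set r := Real.exp (-(d (Fin.last (n + 1)) - d (Fin.last n).castSucc) * ξ) with hrdef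
    set S := ∑ k : Fin (n + 1),
      v k.castSucc * Real.exp (-(d (Fin.last n).castSucc - d k.castSucc) * ξ) with hS
    set w := v (Fin.last (n + 1)) with hw
    have hT : ∑ k : Fin (n + 1),
        v k.castSucc * Real.exp (-(d (Fin.last (n + 1)) - d k.castSucc) * ξ) = r * S := by
      rw [hS, Finset.mul_sum]
      refine Finset.sum_congr rfl fun k _ => ?_
      rw [hrdef, mul_left_comm, ← Real.exp_add]
      ring_nf
    have habs : ∀ k : Fin (n + 1), |d (Fin.last (n + 1)) - d k.castSucc|
        = d (Fin.last (n + 1)) - d k.castSucc := fun k =>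
      abs_of_nonneg (sub_nonneg.2 (hd (Fin.castSucc_lt_last k)).le)
    have hrow : ∑ k : Fin (n + 1),
        w * v k.castSucc * Real.exp (-|d (Fin.last (n + 1)) - d k.castSucc| * ξ)
          = w * (r * S) := by
      rw [← hT, Finset.mul_sum]
      refine Finset.sum_congr rfl fun k _ => ?_
      rw [habs, mul_assoc]
    have hcol : ∑ k : Fin (n + 1),
        v k.castSucc * w * Real.exp (-|d k.castSucc - d (Fin.last (n + 1))| * ξ)
          = w * (r * S) := by
      rw [← hrow]
      refine Finset.sum_congr rfl fun k _ => ?_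
      rw [abs_sub_comm, mul_comm w]
    have hQ : ∑ j, ∑ k, v j * v k * Real.exp (-|d j - d k| * ξ)
        = (∑ j : Fin (n + 1), ∑ k : Fin (n + 1), v j.castSucc * v k.castSucc
            * Real.exp (-|d j.castSucc - d k.castSucc| * ξ)) + 2 * (w * (r * S)) + w ^ 2 := by
      rw [Fin.sum_univ_castSucc]
      simp only [Fin.sum_univ_castSucc (n := n + 1), Finset.sum_add_distrib, ← hw]
      rw [hrow, hcol]
      simp
      ring
    rw [hQ, Fin.sum_univ_castSucc (n := n + 1) (fun j => v j ^ 2),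
      Fin.sum_univ_castSucc (n := n + 1) (fun k => v k * _), hT]
    simp only [← hw, sub_self, neg_zero, zero_mul, Real.exp_zero, mul_one]
    -- after completing the square, `(1 + m / 2) r² S² ≤ (1 + m / 2) (1 - m) S² ≤ (1 - m / 2) S²`
    -- is what remains
    have h1 : 0 ≤ m * (2 * r * S + w) ^ 2 := mul_nonneg hm0 (sq_nonneg _)
    have h2 : 0 ≤ (1 - m - r ^ 2) * S ^ 2 := mul_nonneg (by linarith) (sq_nonneg _)
    have h3 : 0 ≤ m * ((1 - m - r ^ 2) * S ^ 2) := mul_nonneg hm0 h2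
    have h4 : 0 ≤ m * (m * S ^ 2) := by positivity
    nlinarith [h, h1, h2, h3, h4]

/-- Low-frequency coercivity: for strictly increasing `d` there exist `ε, α > 0` such
that for `0 < ξ < ε` the quadratic form of `(e^{-|d_j - d_k| ξ})` is bounded below by
`α ξ |v|²`. -/
theorem exp_neg_abs_matrix_low_freq_coercive (n : ℕ) (hn : 1 ≤ n) (d : Fin n → ℝ)
    (hd : StrictMono d) :
    ∃ ε > 0, ∃ α > 0, ∀ ξ : ℝ, 0 < ξ → ξ < ε → ∀ v : Fin n → ℝ,
      α * ξ * ∑ j, (v j) ^ 2 ≤ ∑ j, ∑ k, v j * v k * Real.exp (-|d j - d k| * ξ) := by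
  obtain ⟨n, rfl⟩ : ∃ k, n = k + 1 := ⟨n - 1, by omega⟩
  obtain ⟨δ, hδ, hδ0⟩ : ∃ δ : ℝ, (∀ i j, i < j → δ < d j - d i) ∧ 0 < δ := by
    have h : ∀ᶠ δ in nhdsWithin (0 : ℝ) (Set.Ioi 0), ∀ i j, i < j → δ < d j - d i := by
      refine Filter.eventually_all.2 fun i => Filter.eventually_all.2 fun j => ?_
      by_cases hij : i < j
      · filter_upwards [nhdsWithin_le_nhds (Iio_mem_nhds (sub_pos.2 (hd hij)))] with δ h _
        exact h
      · exact Filter.Eventually.of_forall fun _ h => absurd h hij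
    exact (h.and self_mem_nhdsWithin).exists
  refine ⟨1 / (2 * δ), by positivity, δ / 4, by positivity, fun ξ hξ hξε v => ?_⟩
  have hx : δ * ξ ≤ 1 / 2 := by
    rw [lt_div_iff₀ (by positivity)] at hξε
    linarith
  have hx0 : 0 < δ * ξ := mul_pos hδ0 hξ
  have key := form_lower_bound ξ (δ * ξ) hx0.le n d v hd fun i j hij => by
    have hle : Real.exp (-(d j - d i) * ξ) ^ 2 ≤ Real.exp (-(2 * (δ * ξ))) := by
      rw [← Real.exp_nat_mul, Real.exp_le_exp]
      have := mul_le_mul_of_nonneg_right (hδ i j hij).le hξ.le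
      push_cast
      linarith
    refine hle.trans ?_
    -- `e^{-2x} ≤ 1 / (1 + 2x) ≤ 1 - x` for `0 ≤ x ≤ 1 / 2`
    rw [Real.exp_neg, inv_le_iff_one_le_mul₀ (Real.exp_pos _)]
    have he := Real.add_one_le_exp (2 * (δ * ξ))
    nlinarith [mul_le_mul_of_nonneg_left he (show 0 ≤ 1 - δ * ξ by linarith)]
  have hS : 0 ≤ (1 - δ * ξ / 2)
      * (∑ k, v k * Real.exp (-(d (Fin.last n) - d k) * ξ)) ^ 2 :=
    mul_nonneg (by linarith) (sq_nonneg _)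
  have hc : δ / 4 * ξ = δ * ξ / 4 := by ring
  rw [hc]
  linarith
end
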